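/- Let A be an abelian category with enough injectives, B an abelian category, and G : A → B an additive left exact functor, with right derived functors R^i G. Suppose 0 → F_n → F_{n−1} → ⋯ → F_1 → F_0 → I → 0 is an exact sequence in A such that R^i G(F_j) = 0 for all j with 0 ≤ j ≤ n and all i with 1 ≤ i ≤ n + 1, and suppose moreover that G(F_0) = 0. Then G(I) = 0. -/

import Mathlib

/-!
The statement is dimension shifting along the resolution. Let `Z j` be the cokernel of
`F (j + 1) ⟶ F j`, so that `0 → Z (j + 1) → F j → Z j → 0` is exact and `Z 0` is `I`. By
descending induction on `j`, `R^(j+1) G (Z (j + 1)) = 0`: for `j = n` the object `Z (n + 1)` is a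
quotient of `F (n + 1) = 0`, and the vanishing of `R^(j+2) G (Z (j + 2))` and of
`R^(j+1) G (F (j + 1))` implies that of `R^(j+1) G (Z (j + 1))`. For `j = 0` this gives
`R^1 G (Z 1) = 0`, so `G (F 0) ⟶ G I` is an epimorphism with zero source.

The parts of the long exact sequence of derived functors that this needs are `epi_map` and
`isZero_X₃`. They follow from the case of a short exact sequence `0 → X → J → X' → 0` with `J`
injective (`shift`, `shift_zero`), where splicing with an injective resolution of `X'` gives an
injective resolution of `X`. An arbitrary sequence `0 → X → Y → Z → 0` is reduced to this case by
means of two auxiliary short exact sequences: `0 → Y → J ⊞ Z → J / X → 0` for `X ⊆ J`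
(`shortExact_rotate`), and `0 → Z → J / X → J / Y → 0` for `Y ⊆ J` (`shortExact_quotients`).
The first reduces `isZero_X₃` in degree `i` to `isZero_X₂` in degree `i`, and the second reduces
`isZero_X₂` in degree `i + 1` to `isZero_X₃` in degree `i`; hence the induction.
-/

open CategoryTheory Limits

namespace RightDerivedVanishing

universe v₁ u₁ v₂ u₂

variable {A : Type u₁} {B : Type u₂} [Category.{v₁} A] [Category.{v₂} B] [Abelian A] [Abelian B]

/-- If `0 → X → J → X' → 0` is exact with `J` injective, splicing `X → J → X'` with an injective
resolution of `X'` gives an injective resolution of `X`. The augmentation `u : X' ⟶ K⁰` of the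
resolution of `X'` is passed separately. -/
noncomputable def splice (S : ShortComplex A) (hS : S.ShortExact) [Injective S.X₂]
    (K : InjectiveResolution S.X₃) (u : S.X₃ ⟶ K.cocomplex.X 0) [Mono u]
    (w : u ≫ K.cocomplex.d 0 1 = 0) (hK : (ShortComplex.mk u (K.cocomplex.d 0 1) w).Exact) :
    InjectiveResolution S.X₁ where
  cocomplex := K.cocomplex.augment (S.g ≫ u) (by simp [w])
  injective n := by
    cases n
    · assumption
    · exact K.injective _
  ι := (CochainComplex.fromSingle₀Equiv _ _).symm ⟨S.f, by
    change S.f ≫ S.g ≫ u = 0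
    simp⟩
  quasiIso := ⟨fun n => by
    have hm := hS.mono_f
    have he := hS.epi_g
    cases n with
    | zero =>
      rw [CochainComplex.quasiIsoAt₀_iff, ShortComplex.quasiIso_iff_of_zeros]
      · have h : (ShortComplex.mk S.f (S.g ≫ u) (by simp)).Exact := by
          let α : S ⟶ ShortComplex.mk S.f (S.g ≫ u) (by simp) :=
            { τ₁ := 𝟙 _, τ₂ := 𝟙 _, τ₃ := u }
          have : Epi α.τ₁ := inferInstanceAs (Epi (𝟙 _))
          have : IsIso α.τ₂ := inferInstanceAs (IsIso (𝟙 _))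
          have : Mono α.τ₃ := inferInstanceAs (Mono u)
          exact (ShortComplex.exact_iff_of_epi_of_isIso_of_mono α).1 hS.exact
        refine (ShortComplex.exact_and_mono_f_iff_of_iso ?_).2 ⟨h, hm⟩
        refine ShortComplex.isoMk (Iso.refl _) (Iso.refl _) (Iso.refl _) ?_ ?_
        · refine (Category.id_comp _).trans (Eq.trans ?_ (Category.comp_id _).symm)
          exact (CochainComplex.fromSingle₀Equiv_symm_apply_f_zero
            (C := K.cocomplex.augment (S.g ≫ u) (by simp [w])) (X := S.X₁) S.f
            (by change S.f ≫ S.g ≫ u = 0; simp)).symm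
        · exact (Category.id_comp _).trans (Category.comp_id _).symm
      all_goals rfl
    | succ n =>
      rw [quasiIsoAt_iff_exactAt _ _ (CochainComplex.exactAt_succ_single_obj _ _)]
      rw [HomologicalComplex.exactAt_iff' _ n (n + 1) (n + 1 + 1) (by simp) (by simp)]
      cases n with
      | zero =>
        let α : ShortComplex.mk (S.g ≫ u) (K.cocomplex.d 0 1) (by simp [w]) ⟶
            ShortComplex.mk _ _ w :=
          { τ₁ := S.g, τ₂ := 𝟙 _, τ₃ := 𝟙 _ }
        have : Epi α.τ₁ := he
        have : IsIso α.τ₂ := inferInstanceAs (IsIso (𝟙 _))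
        have : Mono α.τ₃ := inferInstanceAs (Mono (𝟙 _))
        exact (ShortComplex.exact_iff_of_epi_of_isIso_of_mono α).2 hK
      | succ n => exact K.exact_succ n⟩

/-- The short exact sequence `0 → Y → J ⊞ Z → X' → 0` attached to a morphism from a short exact
sequence `0 → X → Y → Z → 0` to `0 → X → J → X' → 0` that is the identity on `X`. -/
lemma shortExact_rotate {X Y Z J X' : A} {f : X ⟶ Y} {g : Y ⟶ Z} {w : f ≫ g = 0}
    (hS : (ShortComplex.mk f g w).ShortExact) {j : X ⟶ J} {p : J ⟶ X'} {w' : j ≫ p = 0}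
    (hT : (ShortComplex.mk j p w').ShortExact) {e : Y ⟶ J} {c : Z ⟶ X'}
    (he : f ≫ e = j) (hc : e ≫ p = g ≫ c) :
    (ShortComplex.mk (biprod.lift e g) (biprod.desc p (-c)) (by simp [hc])).ShortExact := by
  have hf : Mono f := hS.mono_f
  have hg : Epi g := hS.epi_g
  have hj : Mono j := hT.mono_f
  have hp : Epi p := hT.epi_g
  refine ShortComplex.ShortExact.mk' ?_ ?_ ?_
  · rw [ShortComplex.exact_iff_exact_up_to_refinements]
    intro W x hx
    dsimp at x hx
    obtain ⟨W₁, π₁, hπ₁, y, hy⟩ := surjective_up_to_refinements_of_epi g (x ≫ biprod.snd)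
    have hx' : (x ≫ biprod.fst) ≫ p = (x ≫ biprod.snd) ≫ c := by
      have h : biprod.desc p (-c) = biprod.fst ≫ p - biprod.snd ≫ c := by
        rw [biprod.desc_eq, Preadditive.comp_neg, sub_eq_add_neg]
      simpa [h, sub_eq_zero] using hx
    obtain ⟨W₂, π₂, hπ₂, t, ht⟩ := hT.exact.exact_up_to_refinements
      (π₁ ≫ x ≫ biprod.fst - y ≫ e) (by
        have h1 := π₁ ≫= hx'
        have h2 := hy =≫ c
        simp only [Category.assoc] at h1 h2
        simp [hc, h1, h2])
    dsimp at t ht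
    refine ⟨W₂, π₂ ≫ π₁, inferInstance, π₂ ≫ y + t ≫ f, ?_⟩
    apply biprod.hom_ext
    · simp only [Preadditive.comp_sub, sub_eq_iff_eq_add] at ht
      simp [he, ht, add_comm]
    · simp [hy, w]
  · rw [Preadditive.mono_iff_cancel_zero]
    intro W y hy
    dsimp at y hy
    have h1 : y ≫ e = 0 := by simpa using hy =≫ biprod.fst
    have h2 : y ≫ g = 0 := by simpa using hy =≫ biprod.snd
    have h3 : hS.exact.lift y h2 ≫ f = y := hS.exact.lift_f y h2
    have h4 : hS.exact.lift y h2 = 0 := by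
      rw [← cancel_mono j, ← he, reassoc_of% h3, h1, zero_comp]
    rw [← h3, h4, zero_comp]
  · have : Epi (biprod.inl ≫ biprod.desc p (-c)) := by simpa using hp
    exact epi_of_epi (biprod.inl : J ⟶ J ⊞ Z) _

/-- `0 → Y / X → J / X → J / Y → 0` is exact for `X ⊆ Y ⊆ J`. -/
lemma shortExact_quotients {X Y Z J X' Y' : A} {f : X ⟶ Y} {g : Y ⟶ Z} {w : f ≫ g = 0}
    (hS : (ShortComplex.mk f g w).ShortExact) {e : Y ⟶ J} {q : J ⟶ Y'} {w₂ : e ≫ q = 0}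
    (hY : (ShortComplex.mk e q w₂).ShortExact) {p : J ⟶ X'} {w₁ : (f ≫ e) ≫ p = 0}
    (hX : (ShortComplex.mk (f ≫ e) p w₁).ShortExact) {c : Z ⟶ X'} {r : X' ⟶ Y'}
    (hc : g ≫ c = e ≫ p) (hr : p ≫ r = q) :
    ∃ w₃ : c ≫ r = 0, (ShortComplex.mk c r w₃).ShortExact := by
  have hf : Mono f := hS.mono_f
  have hg : Epi g := hS.epi_g
  have he : Mono e := hY.mono_f
  have hq : Epi q := hY.epi_g
  have hp : Epi p := hX.epi_g
  refine ⟨by rw [← cancel_epi g, reassoc_of% hc, hr, w₂, comp_zero],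
    ShortComplex.ShortExact.mk' ?_ ?_ ?_⟩
  · rw [ShortComplex.exact_iff_exact_up_to_refinements]
    intro W x hx
    dsimp at x hx
    obtain ⟨W₁, π₁, hπ₁, t, ht⟩ := surjective_up_to_refinements_of_epi p x
    have h1 : t ≫ q = 0 := by rw [← hr, ← reassoc_of% ht, hx, comp_zero]
    have h2 : hY.exact.lift t h1 ≫ e = t := hY.exact.lift_f t h1
    refine ⟨W₁, π₁, hπ₁, hY.exact.lift t h1 ≫ g, ?_⟩
    dsimp
    rw [Category.assoc, hc, reassoc_of% h2, ht]
  · rw [Preadditive.mono_iff_cancel_zero]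
    intro W z hz
    dsimp at z hz
    obtain ⟨W₁, π₁, hπ₁, y, hy⟩ := surjective_up_to_refinements_of_epi g z
    have h1 : (y ≫ e) ≫ p = 0 := by
      rw [Category.assoc, ← hc, ← reassoc_of% hy, hz, comp_zero]
    have h2 : hX.exact.lift _ h1 ≫ f ≫ e = y ≫ e := hX.exact.lift_f _ h1
    have h3 : hX.exact.lift _ h1 ≫ f = y := by
      rw [← cancel_mono e, Category.assoc, h2]
    rw [← cancel_epi π₁, hy, ← h3, Category.assoc, w, comp_zero, comp_zero]
  · have : Epi (p ≫ r) := by rw [hr]; exact hq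
    exact epi_of_epi p r

/-- The data of `shortExact_quotients` for an embedding of the middle term of a short exact
sequence into an injective object. -/
lemma exists_quotients [EnoughInjectives A] {S : ShortComplex A} (hS : S.ShortExact) :
    ∃ (J X' Y' : A) (_ : Injective J) (e : S.X₂ ⟶ J) (q : J ⟶ Y') (p : J ⟶ X') (c : S.X₃ ⟶ X')
      (r : X' ⟶ Y') (w₁ : (S.f ≫ e) ≫ p = 0) (w₂ : e ≫ q = 0) (w₃ : c ≫ r = 0),
      (ShortComplex.mk (S.f ≫ e) p w₁).ShortExact ∧ (ShortComplex.mk e q w₂).ShortExact ∧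
      (ShortComplex.mk c r w₃).ShortExact ∧ p ≫ r = q := by
  have hf := hS.mono_f
  have hg := hS.epi_g
  let e := Injective.ι S.X₂
  have hY : (ShortComplex.mk e (cokernel.π e) (cokernel.condition e)).ShortExact :=
    { exact := ShortComplex.exact_cokernel e }
  have hX : (ShortComplex.mk (S.f ≫ e) (cokernel.π (S.f ≫ e))
      (cokernel.condition (S.f ≫ e))).ShortExact :=
    { exact := ShortComplex.exact_cokernel _
      mono_f := mono_comp _ _ }
  let c : S.X₃ ⟶ cokernel (S.f ≫ e) := hS.exact.desc (e ≫ cokernel.π (S.f ≫ e))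
    (by rw [← Category.assoc, cokernel.condition])
  have hc : S.g ≫ c = e ≫ cokernel.π (S.f ≫ e) := hS.exact.g_desc _ _
  let r : cokernel (S.f ≫ e) ⟶ cokernel e := cokernel.desc _ (cokernel.π e) (by simp)
  have hr : cokernel.π (S.f ≫ e) ≫ r = cokernel.π e := cokernel.π_desc _ _ _
  obtain ⟨w₃, hZ⟩ := shortExact_quotients hS hY hX hc hr
  exact ⟨_, _, _, inferInstance, e, _, _, c, r, _, _, w₃, hX, hY, hZ, hr⟩

/-- Truncation of an exact sequence `X₁ → X₂ → X₃ → X₄ → 0` to a short exact sequence. -/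
lemma shortExact_cokernel {X₁ X₂ X₃ X₄ : A} {f : X₁ ⟶ X₂} {g : X₂ ⟶ X₃} {h : X₃ ⟶ X₄}
    {w : f ≫ g = 0} {w' : g ≫ h = 0} (hfg : (ShortComplex.mk f g w).Exact)
    (hgh : (ShortComplex.mk g h w').Exact) [Epi h] :
    (ShortComplex.mk (cokernel.desc f g w) h
      (by rw [← cancel_epi (cokernel.π f)]; simp [w'])).ShortExact := by
  refine ShortComplex.ShortExact.mk' ?_ hfg.mono_cokernelDesc inferInstance
  let α : ShortComplex.mk g h w' ⟶ ShortComplex.mk (cokernel.desc f g w) h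
      (by rw [← cancel_epi (cokernel.π f)]; simp [w']) :=
    { τ₁ := cokernel.π f, τ₂ := 𝟙 _, τ₃ := 𝟙 _ }
  have : Epi α.τ₁ := inferInstanceAs (Epi (cokernel.π f))
  have : IsIso α.τ₂ := inferInstanceAs (IsIso (𝟙 _))
  have : Mono α.τ₃ := inferInstanceAs (Mono (𝟙 _))
  exact (ShortComplex.exact_iff_of_epi_of_isIso_of_mono α).1 hgh

variable (G : A ⥤ B) [G.Additive]

/-- Vanishing of `R^(i+1) G X` is exactness in degree `i + 1` of `G` applied to any injective
resolution of `X`. -/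
lemma isZero_iff_exact [EnoughInjectives A] {X : A} (K : InjectiveResolution X) (i : ℕ) :
    IsZero ((G.rightDerived (i + 1)).obj X) ↔
      (ShortComplex.mk (G.map (K.cocomplex.d i (i + 1))) (G.map (K.cocomplex.d (i + 1) (i + 2)))
        (by simp [← G.map_comp])).Exact := by
  rw [(K.isoRightDerivedObj G (i + 1)).isZero_iff]
  refine (HomologicalComplex.exactAt_iff_isZero_homology _ _).symm.trans ?_
  exact HomologicalComplex.exactAt_iff' _ i (i + 1) (i + 2) (by simp) (by simp)

lemma exact_map [PreservesFiniteLimits G] {S : ShortComplex A} (hS : S.ShortExact) :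
    (S.map G).Exact :=
  have := hS.mono_f
  hS.exact.map_of_mono_of_preservesKernel G inferInstance inferInstance

variable [EnoughInjectives A]

/-- Dimension shifting in positive degrees: apart from its augmentation, the spliced resolution of
`X₁` is the chosen resolution of `X₃` moved up by one degree. -/
lemma shift {S : ShortComplex A} (hS : S.ShortExact) [Injective S.X₂] (i : ℕ) :
    IsZero ((G.rightDerived (i + 2)).obj S.X₁) ↔ IsZero ((G.rightDerived (i + 1)).obj S.X₃) := by
  have K := InjectiveResolution.of S.X₃
  have : Mono (show S.X₃ ⟶ K.cocomplex.X 0 from K.ι.f 0) := inferInstanceAs (Mono (K.ι.f 0))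
  rw [isZero_iff_exact G K,
    isZero_iff_exact G (splice S hS K (K.ι.f 0) K.ι_f_zero_comp_complex_d K.exact₀)]
  exact Iff.rfl

variable [PreservesFiniteLimits G]

/-- Dimension shifting in degree `0`: `R^1 G X₁` is the cokernel of `G X₂ ⟶ G X₃` for `X₂`
injective. -/
lemma shift_zero {S : ShortComplex A} (hS : S.ShortExact) [Injective S.X₂] :
    IsZero ((G.rightDerived 1).obj S.X₁) ↔ Epi (G.map S.g) := by
  obtain ⟨K, u, hu, w, hK⟩ : ∃ (K : InjectiveResolution S.X₃) (u : S.X₃ ⟶ K.cocomplex.X 0)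
      (_ : Mono u) (w : u ≫ K.cocomplex.d 0 1 = 0),
      (ShortComplex.mk u (K.cocomplex.d 0 1) w).Exact :=
    have K := InjectiveResolution.of S.X₃
    ⟨K, K.ι.f 0, inferInstanceAs (Mono (K.ι.f 0)), K.ι_f_zero_comp_complex_d, K.exact₀⟩
  rw [isZero_iff_exact G (splice S hS K u w hK) 0]
  have w' : G.map u ≫ G.map (K.cocomplex.d 0 1) = 0 := by rw [← G.map_comp, w, G.map_zero]
  have hK' : (ShortComplex.mk (G.map u) (G.map (K.cocomplex.d 0 1)) w').Exact :=
    hK.map_of_mono_of_preservesKernel G inferInstance inferInstance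
  let T := ShortComplex.mk (G.map (S.g ≫ u)) (G.map (K.cocomplex.d 0 1)) (by simp [w'])
  let α : T ⟶ ShortComplex.mk (G.map u) (G.map (K.cocomplex.d 0 1)) w' :=
    { τ₁ := G.map S.g, τ₂ := 𝟙 _, τ₃ := 𝟙 _ }
  change T.Exact ↔ _
  constructor
  · intro hT
    rw [epi_iff_surjective_up_to_refinements]
    intro W x
    obtain ⟨W', π, hπ, t, ht⟩ := hT.exact_up_to_refinements (x ≫ G.map u) (by simp [T, w'])
    refine ⟨W', π, hπ, t, ?_⟩
    rw [← cancel_mono (G.map u)]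
    simpa [T] using ht
  · intro hE
    have : Epi α.τ₁ := hE
    have : IsIso α.τ₂ := inferInstanceAs (IsIso (𝟙 _))
    have : Mono α.τ₃ := inferInstanceAs (Mono (𝟙 _))
    exact (ShortComplex.exact_iff_of_epi_of_isIso_of_mono α).2 hK'

/-- The surjectivity part of the long exact sequence in degree `0`. -/
lemma epi_map {S : ShortComplex A} (hS : S.ShortExact)
    (h : IsZero ((G.rightDerived 1).obj S.X₁)) : Epi (G.map S.g) := by
  have hf := hS.mono_f
  have hg := hS.epi_g
  let j := Injective.ι S.X₁
  have hT : (ShortComplex.mk j (cokernel.π j) (cokernel.condition j)).ShortExact :=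
    { exact := ShortComplex.exact_cokernel j }
  have hp : Epi (G.map (cokernel.π j)) :=
    (@shift_zero _ _ _ _ _ _ G _ _ _ _ hT (inferInstanceAs (Injective (Injective.under _)))).1 h
  let e : S.X₂ ⟶ Injective.under S.X₁ := Injective.factorThru j S.f
  have he : S.f ≫ e = j := Injective.comp_factorThru _ _
  let c : S.X₃ ⟶ cokernel j :=
    hS.exact.desc (e ≫ cokernel.π j) (by rw [reassoc_of% he, cokernel.condition])
  have hc : e ≫ cokernel.π j = S.g ≫ c := (hS.exact.g_desc _ _).symm
  have hR := shortExact_rotate hS hT he hc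
  rw [epi_iff_surjective_up_to_refinements]
  intro W z
  obtain ⟨W₁, π₁, hπ₁, t, ht⟩ :=
    surjective_up_to_refinements_of_epi (G.map (cokernel.π j)) (z ≫ G.map c)
  have h₁ : G.map biprod.inl ≫ G.map (biprod.desc (cokernel.π j) (-c)) =
      G.map (cokernel.π j) := by rw [← G.map_comp, biprod.inl_desc]
  have h₂ : G.map biprod.inr ≫ G.map (biprod.desc (cokernel.π j) (-c)) = -G.map c := by
    rw [← G.map_comp, biprod.inr_desc, G.map_neg]
  have h₃ : G.map (biprod.inl : Injective.under S.X₁ ⟶ _ ⊞ S.X₃) ≫ G.map biprod.snd = 0 := by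
    rw [← G.map_comp, biprod.inl_snd, G.map_zero]
  have h₄ : G.map (biprod.inr : S.X₃ ⟶ Injective.under S.X₁ ⊞ _) ≫ G.map biprod.snd = 𝟙 _ := by
    rw [← G.map_comp, biprod.inr_snd, G.map_id]
  have h₅ : G.map (biprod.lift e S.g) ≫ G.map biprod.snd = G.map S.g := by
    rw [← G.map_comp, biprod.lift_snd]
  have h₀ : (t ≫ G.map biprod.inl + π₁ ≫ z ≫ G.map biprod.inr) ≫
      G.map (biprod.desc (cokernel.π j) (-c)) = 0 := by
    simp only [Preadditive.add_comp, Category.assoc, h₁, h₂, ht, Preadditive.comp_neg,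
      add_neg_cancel]
  obtain ⟨W₂, π₂, hπ₂, (y : W₂ ⟶ G.obj S.X₂), hy⟩ :=
    (exact_map G hR).exact_up_to_refinements _ h₀
  refine ⟨W₂, π₂ ≫ π₁, inferInstance, y, ?_⟩
  replace hy : π₂ ≫ (t ≫ G.map biprod.inl + π₁ ≫ z ≫ G.map biprod.inr) =
    y ≫ G.map (biprod.lift e S.g) := hy
  simpa only [Preadditive.add_comp, Preadditive.comp_add, Category.assoc, h₃, h₄, h₅, comp_zero,
    zero_add, Category.comp_id] using hy =≫ G.map biprod.snd

lemma isZero_obj_of_shortExact {S : ShortComplex A} (hS : S.ShortExact)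
    (h₁ : IsZero ((G.rightDerived 1).obj S.X₁)) (h₂ : IsZero (G.obj S.X₂)) :
    IsZero (G.obj S.X₃) :=
  have := epi_map G hS h₁
  IsZero.of_epi (G.map S.g) h₂

/-- If `R^(i+1) G` vanishes on the middle term of a short exact sequence as soon as it vanishes on
the outer terms, then `R^(i+1) G Y = 0` and `R^(i+2) G X = 0` imply `R^(i+1) G Z = 0` for
`0 → X → Y → Z → 0` exact: with `X ⊆ J` injective, apply this to `0 → Y → J ⊞ Z → J / X → 0`. -/
lemma isZero_X₃_of_middle (i : ℕ)
    (H : ∀ S : ShortComplex A, S.ShortExact → IsZero ((G.rightDerived (i + 1)).obj S.X₁) →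
      IsZero ((G.rightDerived (i + 1)).obj S.X₃) → IsZero ((G.rightDerived (i + 1)).obj S.X₂))
    {S : ShortComplex A} (hS : S.ShortExact)
    (h₁ : IsZero ((G.rightDerived (i + 2)).obj S.X₁))
    (h₂ : IsZero ((G.rightDerived (i + 1)).obj S.X₂)) :
    IsZero ((G.rightDerived (i + 1)).obj S.X₃) := by
  have hf := hS.mono_f
  have hg := hS.epi_g
  let j := Injective.ι S.X₁
  have hT : (ShortComplex.mk j (cokernel.π j) (cokernel.condition j)).ShortExact :=
    { exact := ShortComplex.exact_cokernel j }
  have hJ : Injective (ShortComplex.mk j (cokernel.π j) (cokernel.condition j)).X₂ :=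
    inferInstanceAs (Injective (Injective.under _))
  let e : S.X₂ ⟶ Injective.under S.X₁ := Injective.factorThru j S.f
  have he : S.f ≫ e = j := Injective.comp_factorThru _ _
  let c : S.X₃ ⟶ cokernel j :=
    hS.exact.desc (e ≫ cokernel.π j) (by rw [reassoc_of% he, cokernel.condition])
  have hc : e ≫ cokernel.π j = S.g ≫ c := (hS.exact.g_desc _ _).symm
  have hP := H _ (shortExact_rotate hS hT he hc) h₂ ((shift G hT i).1 h₁)
  have : Epi ((G.rightDerived (i + 1)).map (biprod.snd : Injective.under S.X₁ ⊞ S.X₃ ⟶ S.X₃)) :=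
    inferInstance
  exact IsZero.of_epi
    ((G.rightDerived (i + 1)).map (biprod.snd : Injective.under S.X₁ ⊞ S.X₃ ⟶ S.X₃)) hP

/-- Half of the exactness of the long exact sequence at the middle term. For `X ⊆ Y ⊆ J` with `J`
injective, dimension shifting turns the claim about `Y` into the claim, one degree lower, about the
quotient `J / Y` in `0 → Y / X → J / X → J / Y → 0`. -/
lemma isZero_X₂ (i : ℕ) : ∀ S : ShortComplex A, S.ShortExact →
    IsZero ((G.rightDerived (i + 1)).obj S.X₁) →
    IsZero ((G.rightDerived (i + 1)).obj S.X₃) →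
    IsZero ((G.rightDerived (i + 1)).obj S.X₂) := by
  induction i with
  | zero =>
    intro S hS h₁ h₃
    obtain ⟨J, X', Y', hJ, e, q, p, c, r, w₁, w₂, w₃, hX, hY, hZ, hr⟩ := exists_quotients hS
    have hp := (@shift_zero _ _ _ _ _ _ G _ _ _ _ hX hJ).1 h₁
    have hq := epi_map G hZ h₃
    refine (@shift_zero _ _ _ _ _ _ G _ _ _ _ hY hJ).2 ?_
    dsimp at hp hq ⊢
    rw [← hr, G.map_comp]
    exact epi_comp _ _
  | succ i ih =>
    intro S hS h₁ h₃
    obtain ⟨J, X', Y', hJ, e, q, p, c, r, w₁, w₂, w₃, hX, hY, hZ, hr⟩ := exists_quotients hS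
    have h := isZero_X₃_of_middle G i ih hZ h₃ ((@shift _ _ _ _ _ _ G _ _ _ hX hJ i).1 h₁)
    exact (@shift _ _ _ _ _ _ G _ _ _ hY hJ i).2 h

/-- Exactness of the long exact sequence at `R^(i+1) G X₃`, in the case where both neighbours
vanish. -/
lemma isZero_X₃ (i : ℕ) {S : ShortComplex A} (hS : S.ShortExact)
    (h₁ : IsZero ((G.rightDerived (i + 2)).obj S.X₁))
    (h₂ : IsZero ((G.rightDerived (i + 1)).obj S.X₂)) :
    IsZero ((G.rightDerived (i + 1)).obj S.X₃) :=
  isZero_X₃_of_middle G i (isZero_X₂ G i) hS h₁ h₂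

end RightDerivedVanishing



/--
Let `A` be an abelian category with enough injectives, `B` an abelian category, and
`G : A ⥤ B` an additive left exact functor, with right derived functors `R^i G`.
Suppose `0 → F_n → F_{n−1} → ⋯ → F_1 → F_0 → I → 0` is an exact sequence in `A`
(encoded by a `ℕ`-indexed family `F` which vanishes in degrees `> n`, together with
differentials `d`, an augmentation `ε`, and exactness at every spot; exactness at the
tail `0 → F_n → F_{n-1}` follows from exactness at `F_n` since `F (n+1)` is zero)
such that `R^i G (F_j) = 0` for all `0 ≤ j ≤ n` and all `1 ≤ i ≤ n + 1`.
and moreover `G (F_0) = 0`. Then `G (I) = 0`.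
-/
theorem obj_isZero_of_resolution_of_acyclic
    {A : Type*} {B : Type*} [Category A] [Category B]
    [Abelian A] [Abelian B] [EnoughInjectives A]
    (G : A ⥤ B) [G.Additive] [PreservesFiniteLimits G]
    (n : ℕ) (I : A) (F : ℕ → A)
    (hFzero : ∀ j, n < j → IsZero (F j))
    (d : ∀ j, F (j + 1) ⟶ F j) (ε : F 0 ⟶ I)
    (hw0 : d 0 ≫ ε = 0) (hw : ∀ j, d (j + 1) ≫ d j = 0)
    (hepi : Epi ε)
    (hex0 : (ShortComplex.mk (d 0) ε hw0).Exact)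
    (hex : ∀ j, (ShortComplex.mk (d (j + 1)) (d j) (hw j)).Exact)
    (hacyclic : ∀ j, j ≤ n → ∀ i, 1 ≤ i → i ≤ n + 1 →
      IsZero ((G.rightDerived i).obj (F j)))
    (hG0 : IsZero (G.obj (F 0))) :
    IsZero (G.obj I) := by
  have key : ∀ k j, j + k = n →
      IsZero ((G.rightDerived (j + 1)).obj (cokernel (d (j + 1)))) := by
    intro k
    induction k with
    | zero =>
      intro j hj
      have hZ : IsZero (cokernel (d (j + 1))) :=
        IsZero.of_epi (cokernel.π (d (j + 1))) (hFzero (j + 1) (by lia))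
      have : Injective (cokernel (d (j + 1))) := hZ.injective
      exact G.isZero_rightDerived_obj_injective_succ j _
    | succ k ih =>
      intro j hj
      exact RightDerivedVanishing.isZero_X₃ G j
        (RightDerivedVanishing.shortExact_cokernel (hex (j + 1))
          (ShortComplex.exact_cokernel (d (j + 1))))
        (ih (j + 1) (by lia)) (hacyclic (j + 1) (by lia) (j + 1) (by lia) (by lia))
  exact RightDerivedVanishing.isZero_obj_of_shortExact G
    (RightDerivedVanishing.shortExact_cokernel (hex 0) hex0) (key n 0 (by lia)) hG0
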